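/- Let K and p be integers with K − 1 > p ≥ 1, let Z be a (K−1) × p random matrix whose entries are independent standard normal random variables, let W = (1/(K−1)) Zᵀ Z (a central Wishart matrix distributed as (1/(K−1)) W_p(K−1, I_p)), and let B = diag(b_1, …, b_p) be a positive definite diagonal matrix (each b_i > 0). Then E[log det(B + W⁻¹)] ≥ inf { Σ_{i=1}^{p} log(b_i + 1/x_i) : x ∈ ℝ^p, Σ_{i=1}^{p} x_i = p, and for every i, (1 − √(p/(K−1)))² ≤ x_i ≤ (1 + √(p/(K−1)))² + 1/(K−1) }. -/

import Mathlib

open MeasureTheory ProbabilityTheory Matrix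

/-!
For positive definite `X` and `Y`, the inequality `log t ≤ t - 1` on eigenvalues gives
`log det X + log det Y ≤ tr (X Y) - n`. Together with the Schur complement inequality
`(B + 1) (B + W⁻¹)⁻¹ (B + 1) ≤ B + W`, this yields the tangent inequality at `W = 1`
`log det (B + 1) - tr ((B + 1)⁻¹ (W - 1)) ≤ log det (B + W⁻¹)`.
Since `E W = 1`, taking expectations bounds `E[log det (B + W⁻¹)]` below by
`log det (B + 1) = ∑ i, log (b i + 1)`, and this is the value of the objective at the feasible
point `x = (1, …, 1)`.

The expectation converges because `log det W` is integrable: `det (Zᵀ Z)` dominates the square of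
any `p × p` minor of `Z`, each minor is an affine function of any one of its entries, with slope a
smaller minor, and `log |t|` is locally integrable while the entries have a bounded density.
-/

section LogDet

open scoped MatrixOrder

variable {n : Type*} [Fintype n]

lemma trace_mul_nonneg {X Y : Matrix n n ℝ} (hX : X.PosSemidef) (hY : Y.PosSemidef) :
    0 ≤ (X * Y).trace := by
  classical
  obtain ⟨C, rfl⟩ : ∃ C, X = Cᴴ * C := CStarAlgebra.nonneg_iff_eq_star_mul_self.mp hX.nonneg
  rw [← trace_mul_cycle]
  exact (hY.mul_mul_conjTranspose_same C).trace_nonneg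

variable [DecidableEq n]

lemma log_det_le_trace_sub_card {X : Matrix n n ℝ} (hX : X.PosDef) :
    Real.log X.det ≤ X.trace - Fintype.card n := by
  have hdet : X.det = ∏ i, hX.1.eigenvalues i := hX.1.det_eq_prod_eigenvalues
  have htrace : X.trace = ∑ i, hX.1.eigenvalues i := hX.1.trace_eq_sum_eigenvalues
  calc Real.log X.det = ∑ i, Real.log (hX.1.eigenvalues i) := by
        rw [hdet, Real.log_prod fun i _ => (hX.eigenvalues_pos i).ne']
    _ ≤ ∑ i, (hX.1.eigenvalues i - 1) :=
        Finset.sum_le_sum fun i _ => Real.log_le_sub_one_of_pos (hX.eigenvalues_pos i)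
    _ = X.trace - Fintype.card n := by simp [htrace]

lemma log_det_add_log_det_le_trace_mul_sub_card {X Y : Matrix n n ℝ}
    (hX : X.PosDef) (hY : Y.PosDef) :
    Real.log X.det + Real.log Y.det ≤ (X * Y).trace - Fintype.card n := by
  obtain ⟨C, rfl⟩ : ∃ C, X = Cᴴ * C :=
    CStarAlgebra.nonneg_iff_eq_star_mul_self.mp hX.posSemidef.nonneg
  have hdet : (C * Y * Cᴴ).det = (Cᴴ * C).det * Y.det := by simp only [det_mul]; ring
  have htrace : (C * Y * Cᴴ).trace = (Cᴴ * C * Y).trace := trace_mul_cycle C Y Cᴴ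
  have hpos : (C * Y * Cᴴ).PosDef := by
    rw [(hY.posSemidef.mul_mul_conjTranspose_same C).posDef_iff_det_ne_zero, hdet]
    exact (mul_pos hX.det_pos hY.det_pos).ne'
  rw [← Real.log_mul hX.det_pos.ne' hY.det_pos.ne', ← hdet, ← htrace]
  exact log_det_le_trace_sub_card hpos

lemma det_le_det_add {X Y : Matrix n n ℝ} (hX : X.PosSemidef) (hY : Y.PosSemidef) :
    X.det ≤ (X + Y).det := by
  by_cases hdet : X.det = 0
  · exact hdet.trans_le (hX.add hY).det_nonneg
  replace hX : X.PosDef := hX.posDef_iff_det_ne_zero.2 hdet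
  have hXY : (X + Y).PosDef := hX.add_posSemidef hY
  have hsplit : (X + Y)⁻¹ * X = 1 - (X + Y)⁻¹ * Y := by
    rw [eq_sub_iff_add_eq, ← Matrix.mul_add, nonsing_inv_mul _ hXY.det_pos.ne'.isUnit]
  have htangent := log_det_add_log_det_le_trace_mul_sub_card hXY.inv hX
  rw [hsplit, trace_sub, trace_one, det_nonsing_inv, Ring.inverse_eq_inv', Real.log_inv]
    at htangent
  have htrace := trace_mul_nonneg hXY.inv.posSemidef hY
  exact (Real.log_le_log_iff hX.det_pos hXY.det_pos).1 (by linarith)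

-- The difference is the Schur complement of the positive semidefinite block matrix
-- `[[B, B], [B, B]] + [[W, 1], [1, W⁻¹]]`.
lemma add_one_mul_inv_mul_add_one_le {B W : Matrix n n ℝ} (hB : B.PosSemidef) (hW : W.PosDef) :
    (B + 1) * (B + W⁻¹)⁻¹ * (B + 1) ≤ B + W := by
  have hP : (B + W⁻¹).PosDef := hW.inv.posSemidef_add hB
  have := hP.isUnit.invertible
  have := hW.inv.isUnit.invertible
  have hBlocksB : (fromBlocks B B B B).PosSemidef := by
    convert! hB.submatrix (Sum.elim id id)
    ext (i | i) (j | j) <;> rfl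
  have hBlocksW : (fromBlocks W 1 1ᴴ W⁻¹).PosSemidef := by
    rw [PosDef.fromBlocks₂₂ W 1 hW.inv]
    simpa [nonsing_inv_nonsing_inv W hW.det_pos.ne'.isUnit] using PosSemidef.zero
  have hA : (B + 1)ᴴ = B + 1 := by rw [conjTranspose_add, conjTranspose_one, hB.1.eq]
  have hBlocks : (fromBlocks (B + W) (B + 1) (B + 1)ᴴ (B + W⁻¹)).PosSemidef := by
    simpa only [fromBlocks_add, conjTranspose_one, hA] using hBlocksB.add hBlocksW
  rwa [PosDef.fromBlocks₂₂ _ _ hP, hA] at hBlocks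

lemma log_det_add_one_sub_trace_le {B W : Matrix n n ℝ} (hB : B.PosSemidef) (hW : W.PosDef) :
    Real.log (B + 1).det - ((B + 1)⁻¹ * (W - 1)).trace ≤ Real.log (B + W⁻¹).det := by
  have hA : (B + 1).PosDef := PosDef.one.posSemidef_add hB
  have hP : (B + W⁻¹).PosDef := hW.inv.posSemidef_add hB
  have hA_unit := hA.det_pos.ne'.isUnit
  have hschur := trace_mul_nonneg hA.inv.posSemidef (add_one_mul_inv_mul_add_one_le hB hW)
  have hinv : (B + 1)⁻¹ * (B + W - (B + 1) * (B + W⁻¹)⁻¹ * (B + 1)) =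
      1 + (B + 1)⁻¹ * (W - 1) - (B + W⁻¹)⁻¹ * (B + 1) := by
    have : B + W = B + 1 + (W - 1) := by abel
    rw [Matrix.mul_sub, this, Matrix.mul_add, Matrix.mul_assoc, nonsing_inv_mul _ hA_unit,
      nonsing_inv_mul_cancel_left _ _ hA_unit]
  have htangent := log_det_add_log_det_le_trace_mul_sub_card hP.inv hA
  rw [det_nonsing_inv, Ring.inverse_eq_inv', Real.log_inv] at htangent
  rw [hinv, trace_sub, trace_add, trace_one] at hschur
  linarith

lemma log_det_add_inv_le {B W : Matrix n n ℝ} (hB : B.PosSemidef) (hW : W.PosDef) :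
    Real.log (B + W⁻¹).det ≤ (B * W).trace - Real.log W.det := by
  have h := log_det_add_log_det_le_trace_mul_sub_card (hW.inv.posSemidef_add hB) hW
  rw [Matrix.add_mul, nonsing_inv_mul _ hW.det_pos.ne'.isUnit, trace_add, trace_one] at h
  linarith

lemma det_submatrix_sq_le_det_transpose_mul_self {m : Type*} [Fintype m] (Z : Matrix m n ℝ)
    (f : n ↪ m) : (Z.submatrix f id).det ^ 2 ≤ (Zᵀ * Z).det := by
  classical
  set s : Finset m := Finset.univ.map f
  set Y : Matrix n n ℝ := Z.submatrix f id
  set R : Matrix ↥sᶜ n ℝ := Z.submatrix Subtype.val id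
  have hsplit : Zᵀ * Z = Yᵀ * Y + Rᵀ * R := by
    ext i j
    calc (Zᵀ * Z) i j = ∑ k ∈ s, Z k i * Z k j + ∑ k ∈ sᶜ, Z k i * Z k j :=
          (Finset.sum_add_sum_compl s _).symm
      _ = (Yᵀ * Y + Rᵀ * R) i j := by
          rw [Finset.sum_map, ← Finset.sum_coe_sort sᶜ]
          rfl
  have hR : (Rᵀ * R).PosSemidef := posSemidef_conjTranspose_mul_self R
  have hY : (Yᵀ * Y).PosSemidef := posSemidef_conjTranspose_mul_self Y
  have hdet : Y.det ^ 2 = (Yᵀ * Y).det := by rw [det_mul, det_transpose, sq]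
  rw [hdet, hsplit]
  exact det_le_det_add hY hR

lemma log_det_diagonal_add_one {b : n → ℝ} (hb : ∀ i, 0 < b i) :
    Real.log (diagonal b + 1).det = ∑ i, Real.log (b i + 1) := by
  rw [← diagonal_one, diagonal_add, det_diagonal, Real.log_prod fun i _ => by linarith [hb i]]

end LogDet

section RandomMatrix

variable {n : Type*} [Fintype n] {Ω : Type*} [MeasurableSpace Ω] {μ : Measure Ω}

lemma integrable_trace_mul {W : Ω → Matrix n n ℝ} (hW : ∀ i j, Integrable (fun ω => W ω i j) μ)
    (A : Matrix n n ℝ) : Integrable (fun ω => (A * W ω).trace) μ := by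
  simp only [trace, diag_apply, mul_apply]
  exact integrable_finsetSum _ fun i _ => integrable_finsetSum _ fun j _ => (hW j i).const_mul _

lemma integral_trace_mul {W : Ω → Matrix n n ℝ} (hW : ∀ i j, Integrable (fun ω => W ω i j) μ)
    (A : Matrix n n ℝ) :
    ∫ ω, (A * W ω).trace ∂μ = (A * of fun i j => ∫ ω, W ω i j ∂μ).trace := by
  have hAW (i j k : n) : Integrable (fun ω => A i j * W ω j k) μ := (hW j k).const_mul _
  simp only [trace, diag_apply, mul_apply, of_apply]
  rw [integral_finsetSum _ fun i _ => integrable_finsetSum _ fun j _ => hAW i j i]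
  simp only [integral_finsetSum _ fun _ _ => hAW _ _ _, integral_const_mul]

variable [DecidableEq n]

lemma aemeasurable_det {W : Ω → Matrix n n ℝ}
    (hW : ∀ i j, AEMeasurable (fun ω => W ω i j) μ) : AEMeasurable (fun ω => (W ω).det) μ := by
  simp only [det_apply]
  exact Finset.aemeasurable_fun_sum _ fun σ _ =>
    (Finset.aemeasurable_fun_prod _ fun i _ => hW (σ i) i).const_smul _

variable {B : Matrix n n ℝ} {W : Ω → Matrix n n ℝ}

lemma aemeasurable_log_det_add_inv (hpos : ∀ᵐ ω ∂μ, (W ω).PosDef)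
    (hW : ∀ i j, AEMeasurable (fun ω => W ω i j) μ) :
    AEMeasurable (fun ω => Real.log (B + (W ω)⁻¹).det) μ := by
  have hBW (i j : n) : AEMeasurable (fun ω => (B * W ω + 1) i j) μ := by
    simp only [Matrix.add_apply, mul_apply]
    exact (Finset.aemeasurable_fun_sum _ fun k _ => (hW k j).const_mul _).add_const _
  have hquot : AEMeasurable (fun ω => Real.log ((B * W ω + 1).det / (W ω).det)) μ :=
    ((aemeasurable_det hBW).div (aemeasurable_det hW)).log
  refine hquot.congr ?_
  filter_upwards [hpos] with ω hω
  have hdet : (W ω).det ≠ 0 := hω.det_pos.ne'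
  have hmul : (B + (W ω)⁻¹) * W ω = B * W ω + 1 := by
    rw [Matrix.add_mul, nonsing_inv_mul _ hdet.isUnit]
  rw [← hmul, det_mul, mul_div_cancel_right₀ _ hdet]

lemma integrable_log_det_add_inv [IsFiniteMeasure μ] (hB : B.PosSemidef)
    (hpos : ∀ᵐ ω ∂μ, (W ω).PosDef) (hW : ∀ i j, Integrable (fun ω => W ω i j) μ)
    (hlog : Integrable (fun ω => Real.log (W ω).det) μ) :
    Integrable (fun ω => Real.log (B + (W ω)⁻¹).det) μ := by
  refine integrable_of_le_of_le
    (aemeasurable_log_det_add_inv hpos fun i j => (hW i j).1.aemeasurable).aestronglyMeasurable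
    (hpos.mono fun ω hω => log_det_add_one_sub_trace_le hB hω)
    (hpos.mono fun ω hω => log_det_add_inv_le hB hω) ?_ ((integrable_trace_mul hW B).sub hlog)
  exact (integrable_const _).sub
    (integrable_trace_mul (fun i j => (hW i j).sub (integrable_const _)) _)

lemma log_det_add_one_le_integral_log_det_add_inv [IsProbabilityMeasure μ] (hB : B.PosSemidef)
    (hpos : ∀ᵐ ω ∂μ, (W ω).PosDef) (hW : ∀ i j, Integrable (fun ω => W ω i j) μ)
    (hmean : ∀ i j, ∫ ω, W ω i j ∂μ = (1 : Matrix n n ℝ) i j)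
    (hlog : Integrable (fun ω => Real.log (W ω).det) μ) :
    Real.log (B + 1).det ≤ ∫ ω, Real.log (B + (W ω)⁻¹).det ∂μ := by
  have hsub (i j : n) : Integrable (fun ω => (W ω - 1) i j) μ := (hW i j).sub (integrable_const _)
  have htrace : Integrable (fun ω => ((B + 1)⁻¹ * (W ω - 1)).trace) μ :=
    integrable_trace_mul hsub _
  have hmean_sub : (of fun i j => ∫ ω, (W ω - 1) i j ∂μ) = 0 := by
    ext i j
    simp [integral_sub (hW i j) (integrable_const _), hmean]
  calc Real.log (B + 1).det
      = ∫ ω, (Real.log (B + 1).det - ((B + 1)⁻¹ * (W ω - 1)).trace) ∂μ := by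
        rw [integral_sub (integrable_const _) htrace, integral_trace_mul hsub, hmean_sub]
        simp
    _ ≤ ∫ ω, Real.log (B + (W ω)⁻¹).det ∂μ :=
        integral_mono_ae ((integrable_const _).sub htrace)
          (integrable_log_det_add_inv hB hpos hW hlog)
          (hpos.mono fun ω hω => log_det_add_one_sub_trace_le hB hω)

end RandomMatrix

section NegPartLog

open scoped ENNReal NNReal

/-- The negative part of `log |x|`, with values in `[0, ∞]`. Its value at `0` is `∞`, so that a
random variable `X` with `∫⁻ negPartLog X < ∞` is almost surely nonzero. -/
noncomputable def negPartLog (x : ℝ) : ℝ≥0∞ := if x = 0 then ∞ else ENNReal.ofReal (-Real.log x)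

@[fun_prop]
lemma measurable_negPartLog : Measurable negPartLog :=
  Measurable.ite (measurableSet_singleton 0) measurable_const (by fun_prop)

lemma negPartLog_mul_le (x y : ℝ) : negPartLog (x * y) ≤ negPartLog x + negPartLog y := by
  by_cases hx : x = 0
  · simp [negPartLog, hx]
  by_cases hy : y = 0
  · simp [negPartLog, hy]
  simp only [negPartLog, hx, hy, mul_eq_zero, or_self, if_false]
  rw [Real.log_mul hx hy, neg_add]
  exact ENNReal.ofReal_add_le

lemma neg_log_le_toReal_negPartLog {x : ℝ} (hx : x ≠ 0) : -Real.log x ≤ (negPartLog x).toReal := by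
  rw [negPartLog, if_neg hx, ENNReal.toReal_ofReal']
  exact le_max_left _ _

lemma negPartLog_eq_zero_of_one_le_abs {x : ℝ} (hx : 1 ≤ |x|) : negPartLog x = 0 := by
  have hx0 : x ≠ 0 := by
    rintro rfl
    norm_num at hx
  rw [negPartLog, if_neg hx0, ENNReal.ofReal_eq_zero, neg_nonpos, ← Real.log_abs]
  exact Real.log_nonneg hx

lemma lintegral_negPartLog_lt_top : ∫⁻ x, negPartLog x < ∞ := by
  have hle : ∀ᵐ x : ℝ, negPartLog x ≤ (Set.Ioc (-1 : ℝ) 1).indicator (‖Real.log ·‖ₑ) x := by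
    filter_upwards [Measure.ae_ne volume (0 : ℝ)] with x hx
    by_cases hmem : x ∈ Set.Ioc (-1 : ℝ) 1
    · rw [Set.indicator_of_mem hmem, negPartLog, if_neg hx, Real.enorm_eq_ofReal_abs]
      exact ENNReal.ofReal_le_ofReal (neg_le_abs _)
    · refine (negPartLog_eq_zero_of_one_le_abs ?_).trans_le zero_le
      contrapose! hmem
      exact ⟨(abs_lt.1 hmem).1, (abs_lt.1 hmem).2.le⟩
  calc ∫⁻ x, negPartLog x ≤ ∫⁻ x in Set.Ioc (-1 : ℝ) 1, ‖Real.log x‖ₑ := by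
        rw [← lintegral_indicator measurableSet_Ioc]
        exact lintegral_mono_ae hle
    _ < ∞ := (intervalIntegral.intervalIntegrable_log' (a := -1) (b := 1)).1.2

variable {ν : Measure ℝ} [IsProbabilityMeasure ν] {C : ℝ≥0}

lemma lintegral_negPartLog_mul_add_le (hν : ν ≤ C • volume) (a c : ℝ) :
    ∫⁻ t, negPartLog (t * a + c) ∂ν ≤ negPartLog a + C * ∫⁻ x, negPartLog x := by
  by_cases ha : a = 0
  · simp [negPartLog, ha]
  calc ∫⁻ t, negPartLog (t * a + c) ∂ν
      = ∫⁻ t, negPartLog (a * (t + c / a)) ∂ν := by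
        congr! 3 with t
        field_simp
    _ ≤ ∫⁻ t, (negPartLog a + negPartLog (t + c / a)) ∂ν :=
        lintegral_mono fun t => negPartLog_mul_le _ _
    _ = negPartLog a + ∫⁻ t, negPartLog (t + c / a) ∂ν := by
        simp [lintegral_add_left]
    _ ≤ negPartLog a + ∫⁻ t, negPartLog (t + c / a) ∂(C • volume) := by gcongr
    _ = negPartLog a + C * ∫⁻ x, negPartLog x := by
        rw [lintegral_smul_measure, lintegral_add_right_eq_self negPartLog]
        rfl

lemma det_updateRow_update_zero {k : ℕ} (M : Matrix (Fin (k + 1)) (Fin (k + 1)) ℝ) (t : ℝ) :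
    (M.updateRow 0 (Function.update (M 0) 0 t)).det =
      t * (M.submatrix Fin.succ Fin.succ).det +
        (M.updateRow 0 (Function.update (M 0) 0 0)).det := by
  have hrow : Function.update (M 0) 0 t = t • Pi.single 0 1 + Function.update (M 0) 0 0 := by
    ext j
    refine Fin.cases ?_ (fun j => ?_) j <;> simp
  rw [hrow, det_updateRow_add, det_updateRow_smul, ← adjugate_apply,
    adjugate_fin_succ_eq_det_submatrix]
  simp [Fin.succAbove_zero]

lemma lintegral_negPartLog_det_fin_lt_top (hν : ν ≤ C • volume) {ι : Type*} [Fintype ι] {k : ℕ}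
    {e : Fin k → Fin k → ι} (he : Function.Injective2 e) :
    ∫⁻ x, negPartLog (of fun i j => x (e i j)).det ∂(Measure.pi fun _ : ι => ν) < ∞ := by
  classical
  induction k with
  | zero => simp [negPartLog]
  | succ k ih =>
    set M : (ι → ℝ) → Matrix (Fin (k + 1)) (Fin (k + 1)) ℝ := fun x => of fun i j => x (e i j)
    set N : (ι → ℝ) → Matrix (Fin k) (Fin k) ℝ := fun x => (M x).submatrix Fin.succ Fin.succ
    have hN : ∫⁻ x, negPartLog (N x).det ∂(Measure.pi fun _ : ι => ν) < ∞ :=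
      ih fun _ _ _ _ h => (he h).imp (@Fin.succ_injective _ _ _) (@Fin.succ_injective _ _ _)
    have hMmeas : Measurable fun x => negPartLog (M x).det :=
      measurable_negPartLog.comp (Continuous.matrix_det (by fun_prop)).measurable
    have hNmeas : Measurable fun x => negPartLog (N x).det :=
      measurable_negPartLog.comp (Continuous.matrix_det (by fun_prop)).measurable
    have hupdate (x : ι → ℝ) (t : ℝ) : M (Function.update x (e 0 0) t) =
        (M x).updateRow 0 (Function.update (M x 0) 0 t) := by
      ext i j
      by_cases hi : i = 0 <;> by_cases hj : j = 0 <;> simp [M, he.eq_iff, hi, hj]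
    have hNupdate (x : ι → ℝ) (t : ℝ) : N (Function.update x (e 0 0) t) = N x := by
      ext i j
      simp [N, M, he.eq_iff]
    have hdet (x : ι → ℝ) (t : ℝ) : (M (Function.update x (e 0 0) t)).det =
        t * (N x).det + ((M x).updateRow 0 (Function.update (M x 0) 0 0)).det := by
      rw [hupdate, det_updateRow_update_zero]
    calc ∫⁻ x, negPartLog (M x).det ∂(Measure.pi fun _ : ι => ν)
        ≤ ∫⁻ x, (negPartLog (N x).det + C * ∫⁻ y, negPartLog y) ∂(Measure.pi fun _ : ι => ν) := by
          refine lintegral_le_of_lmarginal_le {e 0 0} hMmeas (hNmeas.add_const _) fun x => ?_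
          simpa only [lmarginal_singleton, hNupdate, hdet, lintegral_const, measure_univ, mul_one]
            using lintegral_negPartLog_mul_add_le hν _ _
      _ < ∞ := by
          rw [lintegral_add_left hNmeas, lintegral_const, measure_univ, mul_one]
          exact ENNReal.add_lt_top.2
            ⟨hN, ENNReal.mul_lt_top ENNReal.coe_lt_top lintegral_negPartLog_lt_top⟩

lemma lintegral_negPartLog_det_lt_top (hν : ν ≤ C • volume) {ι n : Type*} [Fintype ι] [Fintype n]
    [DecidableEq n] {e : n → n → ι} (he : Function.Injective2 e) :
    ∫⁻ x, negPartLog (of fun i j => x (e i j)).det ∂(Measure.pi fun _ : ι => ν) < ∞ := by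
  set σ : Fin (Fintype.card n) ≃ n := (Fintype.equivFin n).symm
  have hσ : Function.Injective2 fun i j => e (σ i) (σ j) :=
    fun _ _ _ _ h => (he h).imp (fun hi => σ.injective hi) (fun hj => σ.injective hj)
  convert lintegral_negPartLog_det_fin_lt_top hν hσ using 4 with x
  exact (det_submatrix_equiv_self σ _).symm

end NegPartLog

section IIDCoordinates

variable {ι Ω : Type*} [Fintype ι] [MeasurableSpace Ω] {μ : Measure Ω} {ν : Measure ℝ}
  [IsProbabilityMeasure ν] {X : Ω → ι → ℝ}

lemma hasLaw_apply_of_hasLaw_pi (hX : HasLaw X (Measure.pi fun _ => ν) μ) (i : ι) :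
    HasLaw (fun ω => X ω i) ν μ :=
  (measurePreserving_eval (fun _ => ν) i).fun_comp_hasLaw hX

lemma integrable_apply_mul_apply_of_hasLaw_pi (hX : HasLaw X (Measure.pi fun _ => ν) μ)
    (hsq : Integrable (fun t => t ^ 2) ν) (i j : ι) : Integrable (fun ω => X ω i * X ω j) μ := by
  have hX_memLp (i : ι) : MemLp (fun ω => X ω i) 2 μ := by
    have hlaw := hasLaw_apply_of_hasLaw_pi hX i
    have hid : MemLp id 2 (μ.map fun ω => X ω i) := by
      rw [hlaw.map_eq]
      exact (memLp_two_iff_integrable_sq measurable_id.aestronglyMeasurable).2 hsq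
    exact hid.comp_of_map hlaw.aemeasurable
  exact (hX_memLp i).integrable_mul (hX_memLp j)

lemma integral_apply_mul_apply_of_hasLaw_pi [DecidableEq ι]
    (hX : HasLaw X (Measure.pi fun _ => ν) μ) (hmean : ∫ t, t ∂ν = 0) (i j : ι) :
    ∫ ω, X ω i * X ω j ∂μ = if i = j then ∫ t, t ^ 2 ∂ν else 0 := by
  have := hX.isProbabilityMeasure
  have hlaw := hasLaw_apply_of_hasLaw_pi hX
  have hindep : iIndepFun (fun i ω => X ω i) μ := (iIndepFun_iff_hasLaw_pi_pi hlaw).2 hX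
  split_ifs with hij
  · subst hij
    simp only [← sq]
    exact (hlaw i).integral_comp (f := fun t => t ^ 2) (by fun_prop)
  · rw [(hindep.indepFun hij).integral_fun_mul_eq_mul_integral
      (hlaw i).aemeasurable.aestronglyMeasurable (hlaw j).aemeasurable.aestronglyMeasurable,
      (hlaw i).integral_eq, hmean, zero_mul]

end IIDCoordinates

section SampleCovariance

variable {m n : Type*} [Fintype m]

/-- The sample covariance matrix `(1/N) Zᵀ Z` of `N` observations of a centred random vector, the
rows of `Z`. The empirical mean is not subtracted. -/
noncomputable def sampleCovariance (Z : Matrix m n ℝ) : Matrix n n ℝ :=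
  (Fintype.card m : ℝ)⁻¹ • (Zᵀ * Z)

lemma sampleCovariance_apply (Z : Matrix m n ℝ) (i j : n) :
    sampleCovariance Z i j = (Fintype.card m : ℝ)⁻¹ * ∑ k, Z k i * Z k j := by
  simp [sampleCovariance, mul_apply]

lemma posSemidef_sampleCovariance [Finite n] (Z : Matrix m n ℝ) : (sampleCovariance Z).PosSemidef :=
  (posSemidef_conjTranspose_mul_self Z).smul (by positivity)

variable [Fintype n] [DecidableEq n]

lemma det_submatrix_sq_le_card_pow_mul_det_sampleCovariance (Z : Matrix m n ℝ) (f : n ↪ m) :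
    (Z.submatrix f id).det ^ 2 ≤
      (Fintype.card m : ℝ) ^ Fintype.card n * (sampleCovariance Z).det := by
  refine (det_submatrix_sq_le_det_transpose_mul_self Z f).trans_eq ?_
  rcases isEmpty_or_nonempty n with hn | ⟨⟨i⟩⟩
  · simp
  have : Nonempty m := ⟨f i⟩
  rw [sampleCovariance, det_smul, ← mul_assoc, ← mul_pow, mul_inv_cancel₀ (by positivity), one_pow,
    one_mul]

lemma posDef_sampleCovariance {Z : Matrix m n ℝ} {f : n ↪ m} (hf : (Z.submatrix f id).det ≠ 0) :
    (sampleCovariance Z).PosDef := by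
  rw [(posSemidef_sampleCovariance Z).posDef_iff_det_ne_zero]
  intro hdet
  have hle := det_submatrix_sq_le_card_pow_mul_det_sampleCovariance Z f
  rw [hdet, mul_zero] at hle
  exact (sq_pos_of_ne_zero hf).not_ge hle

lemma neg_log_det_sampleCovariance_le {Z : Matrix m n ℝ} {f : n ↪ m}
    (hf : (Z.submatrix f id).det ≠ 0) :
    -Real.log (sampleCovariance Z).det ≤ Fintype.card n * Real.log (Fintype.card m) +
      2 * (negPartLog (Z.submatrix f id).det).toReal := by
  have hle := det_submatrix_sq_le_card_pow_mul_det_sampleCovariance Z f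
  have hsq := sq_pos_of_ne_zero hf
  have hpow : (Fintype.card m : ℝ) ^ Fintype.card n ≠ 0 :=
    left_ne_zero_of_mul (hsq.trans_le hle).ne'
  have hlog := Real.log_le_log hsq hle
  rw [Real.log_pow, Real.log_mul hpow (posDef_sampleCovariance hf).det_pos.ne', Real.log_pow]
    at hlog
  have := neg_log_le_toReal_negPartLog hf
  push_cast at hlog
  linarith

end SampleCovariance

section RandomSampleCovariance

open scoped NNReal ENNReal

variable {m n Ω : Type*} [Fintype m] [Fintype n] [MeasurableSpace Ω] {μ : Measure Ω}
  {ν : Measure ℝ} [IsProbabilityMeasure ν] {Z : Ω → Matrix m n ℝ}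

lemma integrable_sampleCovariance_apply
    (hZ : HasLaw (fun ω (ij : m × n) => Z ω ij.1 ij.2) (Measure.pi fun _ => ν) μ)
    (hsq : Integrable (fun t => t ^ 2) ν) (i j : n) :
    Integrable (fun ω => sampleCovariance (Z ω) i j) μ := by
  simp only [sampleCovariance_apply]
  exact (integrable_finsetSum _ fun k _ =>
    integrable_apply_mul_apply_of_hasLaw_pi hZ hsq (k, i) (k, j)).const_mul _

variable [DecidableEq n]

lemma integral_sampleCovariance_apply [Nonempty m]
    (hZ : HasLaw (fun ω (ij : m × n) => Z ω ij.1 ij.2) (Measure.pi fun _ => ν) μ)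
    (hmean : ∫ t, t ∂ν = 0) (hvar : ∫ t, t ^ 2 ∂ν = 1) (i j : n) :
    ∫ ω, sampleCovariance (Z ω) i j ∂μ = (1 : Matrix n n ℝ) i j := by
  classical
  have hentry (k : m) : ∫ ω, Z ω k i * Z ω k j ∂μ = (1 : Matrix n n ℝ) i j := by
    simpa [hvar, one_apply] using integral_apply_mul_apply_of_hasLaw_pi hZ hmean (k, i) (k, j)
  simp only [sampleCovariance_apply, integral_const_mul]
  rw [integral_finsetSum _ fun k _ => integrable_apply_mul_apply_of_hasLaw_pi hZ
    (integrable_of_integral_eq_one hvar) (k, i) (k, j)]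
  simp [hentry]

variable {C : ℝ≥0}

lemma aemeasurable_negPartLog_det_submatrix
    (hZ : HasLaw (fun ω (ij : m × n) => Z ω ij.1 ij.2) (Measure.pi fun _ => ν) μ) (f : n ↪ m) :
    AEMeasurable (fun ω => negPartLog ((Z ω).submatrix f id).det) μ :=
  measurable_negPartLog.comp_aemeasurable
    (aemeasurable_det fun i j => (hasLaw_apply_of_hasLaw_pi hZ (f i, j)).aemeasurable)

lemma lintegral_negPartLog_det_submatrix_lt_top
    (hZ : HasLaw (fun ω (ij : m × n) => Z ω ij.1 ij.2) (Measure.pi fun _ => ν) μ)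
    (hν : ν ≤ C • volume) (f : n ↪ m) :
    ∫⁻ ω, negPartLog ((Z ω).submatrix f id).det ∂μ < ∞ := by
  have hf : Function.Injective2 fun i j : n => (f i, j) := fun _ _ _ _ h =>
    ⟨f.injective (congrArg Prod.fst h), congrArg Prod.snd h⟩
  have hmeas : Measurable fun x : m × n → ℝ => negPartLog (of fun i j => x (f i, j)).det :=
    measurable_negPartLog.comp (Continuous.matrix_det (by fun_prop)).measurable
  exact (hZ.lintegral_comp hmeas.aemeasurable).trans_lt (lintegral_negPartLog_det_lt_top hν hf)

lemma ae_det_submatrix_ne_zero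
    (hZ : HasLaw (fun ω (ij : m × n) => Z ω ij.1 ij.2) (Measure.pi fun _ => ν) μ)
    (hν : ν ≤ C • volume) (f : n ↪ m) : ∀ᵐ ω ∂μ, ((Z ω).submatrix f id).det ≠ 0 := by
  filter_upwards [ae_lt_top' (aemeasurable_negPartLog_det_submatrix hZ f)
    (lintegral_negPartLog_det_submatrix_lt_top hZ hν f).ne] with ω hω hdet
  simp [negPartLog, hdet] at hω

lemma integrable_log_det_sampleCovariance
    (hZ : HasLaw (fun ω (ij : m × n) => Z ω ij.1 ij.2) (Measure.pi fun _ => ν) μ)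
    (hν : ν ≤ C • volume) (hsq : Integrable (fun t => t ^ 2) ν) (f : n ↪ m) :
    Integrable (fun ω => Real.log (sampleCovariance (Z ω)).det) μ := by
  have := hZ.isProbabilityMeasure
  have hentry := integrable_sampleCovariance_apply hZ hsq
  have hminor := ae_det_submatrix_ne_zero hZ hν f
  have hlower : Integrable (fun ω => -(Fintype.card n * Real.log (Fintype.card m) +
      2 * (negPartLog ((Z ω).submatrix f id).det).toReal)) μ :=
    ((integrable_const _).add ((integrable_toReal_of_lintegral_ne_top
      (aemeasurable_negPartLog_det_submatrix hZ f)
      (lintegral_negPartLog_det_submatrix_lt_top hZ hν f).ne).const_mul 2)).neg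
  have hupper : Integrable (fun ω => (sampleCovariance (Z ω)).trace - Fintype.card n) μ :=
    (integrable_finsetSum _ fun i _ => hentry i i).sub (integrable_const _)
  refine integrable_of_le_of_le
    (aemeasurable_det fun i j => (hentry i j).1.aemeasurable).log.aestronglyMeasurable
    ?_ ?_ hlower hupper
  · exact hminor.mono fun ω hω => neg_le.1 (neg_log_det_sampleCovariance_le hω)
  · exact hminor.mono fun ω hω => log_det_le_trace_sub_card (posDef_sampleCovariance hω)

theorem expectation_logdet_diagonal_add_inv_wishart_ge_general
    (hZ : HasLaw (fun ω (ij : m × n) => Z ω ij.1 ij.2) (Measure.pi fun _ => ν) μ)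
    (hν : ν ≤ C • volume) (hmean : ∫ t, t ∂ν = 0) (hvar : ∫ t, t ^ 2 ∂ν = 1)
    (hcard : Fintype.card n ≤ Fintype.card m) {B : Matrix n n ℝ} (hB : B.PosSemidef) :
    Real.log (B + 1).det ≤ ∫ ω, Real.log (B + (sampleCovariance (Z ω))⁻¹).det ∂μ := by
  have := hZ.isProbabilityMeasure
  obtain ⟨f⟩ : Nonempty (n ↪ m) := Function.Embedding.nonempty_of_card_le hcard
  have hsq : Integrable (fun t => t ^ 2) ν := integrable_of_integral_eq_one hvar
  refine log_det_add_one_le_integral_log_det_add_inv hB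
    ((ae_det_submatrix_ne_zero hZ hν f).mono fun ω hω => posDef_sampleCovariance hω)
    (integrable_sampleCovariance_apply hZ hsq) (fun i j => ?_)
    (integrable_log_det_sampleCovariance hZ hν hsq f)
  have : Nonempty m := ⟨f i⟩
  exact integral_sampleCovariance_apply hZ hmean hvar i j

end RandomSampleCovariance

section Gaussian

open scoped NNReal

lemma gaussianReal_le_smul_volume (m : ℝ) {v : ℝ≥0} (hv : v ≠ 0) :
    gaussianReal m v ≤ (√(2 * Real.pi * v))⁻¹.toNNReal • volume := by
  have hpdf (x : ℝ) : gaussianPDF m v x ≤ ENNReal.ofReal (√(2 * Real.pi * v))⁻¹ := by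
    refine ENNReal.ofReal_le_ofReal (mul_le_of_le_one_right (by positivity) ?_)
    exact Real.exp_le_one_iff.2 (div_nonpos_of_nonpos_of_nonneg (by nlinarith) (by positivity))
  calc gaussianReal m v = volume.withDensity (gaussianPDF m v) := gaussianReal_of_var_ne_zero m hv
    _ ≤ volume.withDensity fun _ => ENNReal.ofReal (√(2 * Real.pi * v))⁻¹ :=
        withDensity_mono (.of_forall hpdf)
    _ = (√(2 * Real.pi * v))⁻¹.toNNReal • volume := withDensity_const _

lemma integral_sq_gaussianReal_zero (v : ℝ≥0) : ∫ t, t ^ 2 ∂(gaussianReal 0 v) = v := by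
  have hvar := variance_fun_id_gaussianReal (μ := 0) (v := v)
  rwa [variance_of_integral_eq_zero (by fun_prop) integral_id_gaussianReal] at hvar

end Gaussian

lemma sInf_sum_log_add_one_div_le {n : Type*} [Fintype n] {l u : ℝ} (hl : 0 ≤ l) (hl_one : l ≤ 1)
    (hu : 1 ≤ u) {b : n → ℝ} (hb : ∀ i, 0 < b i) :
    sInf {y : ℝ | ∃ x : n → ℝ, ∑ i, x i = Fintype.card n ∧ (∀ i, l ≤ x i ∧ x i ≤ u) ∧
      y = ∑ i, Real.log (b i + 1 / x i)} ≤ ∑ i, Real.log (b i + 1) := by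
  refine csInf_le ⟨∑ i, Real.log (b i), ?_⟩ ⟨fun _ => 1, by simp, fun _ => ⟨hl_one, hu⟩, by simp⟩
  rintro y ⟨x, -, hx, rfl⟩
  refine Finset.sum_le_sum fun i _ => Real.log_le_log (hb i) ?_
  have hxi : 0 ≤ x i := hl.trans (hx i).1
  linarith [one_div_nonneg.2 hxi]

lemma one_sub_sqrt_sq_le_one {r : ℝ} (hr : r ≤ 1) : (1 - √r) ^ 2 ≤ 1 :=
  pow_le_one₀ (sub_nonneg.2 (Real.sqrt_le_one.2 hr)) (sub_le_self _ (Real.sqrt_nonneg r))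

lemma one_le_one_add_sqrt_sq (r : ℝ) : 1 ≤ (1 + √r) ^ 2 :=
  one_le_pow₀ (le_add_of_nonneg_right (Real.sqrt_nonneg r))

/-- for a `(K-1) × p` random matrix `Z` with i.i.d. standard normal entries,
`W = (1/(K-1)) Zᵀ Z` (a central Wishart matrix), `K - 1 > p ≥ 1`, and a positive definite
diagonal matrix `B = diag (b 1, …, b p)`, the expectation `E[log det (B + W⁻¹)]` is bounded
below by the infimum of `∑ i, log (b i + 1/x i)` over the feasible set
`{x : ∑ i, x i = p, ∀ i, (1 - √(p/(K-1)))² ≤ x i ≤ (1 + √(p/(K-1)))² + 1/(K-1)}`. -/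
theorem expectation_logdet_diagonal_add_inv_wishart_ge (K p : ℕ) (hp : 1 ≤ p) (hKp : p < K - 1)
    {Ω : Type*} [MeasurableSpace Ω] (μ : Measure Ω) [IsProbabilityMeasure μ]
    (Z : Ω → Matrix (Fin (K - 1)) (Fin p) ℝ)
    (hZ : Measure.map (fun ω (ij : Fin (K - 1) × Fin p) => Z ω ij.1 ij.2) μ
        = Measure.pi fun _ : Fin (K - 1) × Fin p => gaussianReal 0 1)
    (b : Fin p → ℝ) (hb : ∀ i, 0 < b i) :
    ∫ ω, Real.log
        ((Matrix.diagonal b + ((((K : ℝ) - 1)⁻¹ • ((Z ω)ᵀ * Z ω))⁻¹ :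
          Matrix (Fin p) (Fin p) ℝ)).det) ∂μ
      ≥ sInf {y : ℝ | ∃ x : Fin p → ℝ,
          (∑ i, x i = (p : ℝ)) ∧
          (∀ i, (1 - Real.sqrt ((p : ℝ) / ((K : ℝ) - 1))) ^ 2 ≤ x i ∧
            x i ≤ (1 + Real.sqrt ((p : ℝ) / ((K : ℝ) - 1))) ^ 2 + 1 / ((K : ℝ) - 1)) ∧
          y = ∑ i, Real.log (b i + 1 / x i)} := by
  have hcast : (K : ℝ) - 1 = Fintype.card (Fin (K - 1)) := by
    rw [Fintype.card_fin, Nat.cast_pred (by omega)]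
  have hlaw : HasLaw (fun ω (ij : Fin (K - 1) × Fin p) => Z ω ij.1 ij.2)
      (Measure.pi fun _ => gaussianReal 0 1) μ :=
    ⟨aemeasurable_of_map_neZero (hZ ▸ inferInstance), hZ⟩
  have hratio : p / ((K : ℝ) - 1) ≤ 1 := by
    rw [hcast, Fintype.card_fin]
    exact div_le_one_of_le₀ (by exact_mod_cast hKp.le) (by positivity)
  have hinv : 0 ≤ 1 / ((K : ℝ) - 1) := by rw [hcast]; positivity
  calc sInf _ ≤ ∑ i, Real.log (b i + 1) := by
        simpa only [Fintype.card_fin] using sInf_sum_log_add_one_div_le (sq_nonneg _)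
          (one_sub_sqrt_sq_le_one hratio)
          (le_add_of_le_of_nonneg (one_le_one_add_sqrt_sq _) hinv) hb
    _ = Real.log (diagonal b + 1).det := (log_det_diagonal_add_one hb).symm
    _ ≤ _ := by
        rw [hcast]
        exact expectation_logdet_diagonal_add_inv_wishart_ge_general hlaw
          (gaussianReal_le_smul_volume 0 one_ne_zero) integral_id_gaussianReal
          (by simp [integral_sq_gaussianReal_zero]) (by simpa using hKp.le)
          (PosSemidef.diagonal fun i => (hb i).le)
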